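/- Let V be a finite set with |V| = n ≥ 2 and symmetric weights C : V × V → [0,1] with C_ii = 0, let 0 < Δ_min ≤ Δ_max, and let ε ≥ 0. Let T be a binary hierarchical clustering tree on V such that: (i) for every internal node t of T with leaf set V_t, every i ∈ V_t has Δ_min ≤ Σ_{j ∈ V_t} C_ij ≤ Δ_max; and (ii) at every internal node t, the split of V_t into the leaf sets (A_t, B_t) of its two children satisfies φ_{V_t}(A_t) ≤ (Δ_max/√Δ_min)·√(min_{∅ ≠ S ⊊ V_t} φ_{V_t}(S) + ε) (the quality guarantee obtained from approximate eigenvectors computed by power iteration). Then cost_V(T) ≤ Δ_max·√(27/Δ_min)·n·log₂(n)·√(cost_V(T*) + n²·ε), where T* minimizes cost_V. -/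

import Mathlib

open Finset

/-- A rooted binary hierarchical clustering tree with leaves labelled by `α`. -/
inductive HTree (α : Type*) where
  | leaf : α → HTree α
  | node : HTree α → HTree α → HTree α

namespace HTree

variable {α : Type*} [DecidableEq α]

/-- The set of leaf labels of a tree. -/
def leaves : HTree α → Finset α
  | .leaf a => {a}
  | .node l r => leaves l ∪ leaves r

/-- All leaf labels of the tree are pairwise distinct, i.e. the leaves of the two
subtrees of every internal node are disjoint. -/
def distinctLeaves : HTree α → Prop
  | .leaf _ => True
  | .node l r => distinctLeaves l ∧ distinctLeaves r ∧ Disjoint (leaves l) (leaves r)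

/-- `T` is a hierarchical clustering tree on the whole vertex set `V` (= all of `α`):
its leaves are pairwise distinct and are exactly the elements of `V`. -/
def IsTreeOn [Fintype α] (T : HTree α) : Prop :=
  distinctLeaves T ∧ leaves T = Finset.univ

/-- Dasgupta's hierarchical clustering cost
`cost_V(T) = Σ_{unordered pairs {i,j}, i ≠ j} C_ij·|leaves(T[i ∨ j])|`,
written equivalently in recursive form: each internal node `t` splitting into children
with leaf sets `A`, `B` contributes `|leaves(t)| · Σ_{i ∈ A, j ∈ B} C_ij`
(each unordered cross pair `{i,j}` has `t` as its lowest common ancestor and is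
counted exactly once since `A` and `B` are disjoint). -/
noncomputable def cost (C : α → α → ℝ) : HTree α → ℝ
  | .leaf _ => 0
  | .node l r =>
      ((leaves l ∪ leaves r).card : ℝ) * (∑ i ∈ leaves l, ∑ j ∈ leaves r, C i j)
        + cost C l + cost C r

end HTree

/-- The expansion within `W` of a nonempty proper subset `S ⊊ W`:
`φ_W(S) = (Σ_{i ∈ S, j ∈ W∖S} C_ij) / min(|S|, |W∖S|)`. -/
noncomputable def expansionIn {α : Type*} [DecidableEq α]
    (C : α → α → ℝ) (W S : Finset α) : ℝ :=
  (∑ i ∈ S, ∑ j ∈ W \ S, C i j) / min (S.card : ℝ) (((W \ S).card : ℝ))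

/-- The two conditions, at every internal node `t` of the tree with leaf set `V_t`:
(i) every `i ∈ V_t` has degree (within `V_t`) in `[Δ_min, Δ_max]`; and
(ii) the split `(A_t, B_t)` of `V_t` into the leaf sets of the two children satisfies the
approximate-eigenvector sweep-cut guarantee
`φ_{V_t}(A_t) ≤ (Δ_max/√Δ_min)·√(min_{∅ ≠ S ⊊ V_t} φ_{V_t}(S) + ε)`,
expressed equivalently as `φ_{V_t}(A_t) ≤ (Δ_max/√Δ_min)·√(φ_{V_t}(S) + ε)` for every
nonempty proper `S ⊊ V_t`. -/
def ApproxCheegerSplits {α : Type*} [DecidableEq α]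
    (C : α → α → ℝ) (Δmin Δmax ε : ℝ) : HTree α → Prop
  | .leaf _ => True
  | .node l r =>
      (∀ i ∈ l.leaves ∪ r.leaves,
          Δmin ≤ (∑ j ∈ l.leaves ∪ r.leaves, C i j) ∧
            (∑ j ∈ l.leaves ∪ r.leaves, C i j) ≤ Δmax) ∧
      (∀ S ⊆ l.leaves ∪ r.leaves, S.Nonempty → S ≠ l.leaves ∪ r.leaves →
          expansionIn C (l.leaves ∪ r.leaves) l.leaves
            ≤ (Δmax / Real.sqrt Δmin)
                * Real.sqrt (expansionIn C (l.leaves ∪ r.leaves) S + ε)) ∧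
      ApproxCheegerSplits C Δmin Δmax ε l ∧ ApproxCheegerSplits C Δmin Δmax ε r

/-!
Follow the comparison tree `T'` from its root, always into the child containing more of a given
vertex set `W`, down to the first cluster holding at most two thirds of `W`. That cluster holds at
least one third of `W`, and every edge leaving it is cut at an ancestor with at least `2|W|/3`
leaves. Hence it induces a cut of `W` of expansion at most `(9/2) · cost(T') / |W|²`.

Apply this to `W = V_t` at every internal node `t` of `T`. The quality guarantee then bounds the
contribution of `t` to `cost(T)` by a fixed multiple of `min(|A_t|, |B_t|)`. Charging that minimum
to the vertices of the smaller child, each vertex pays at most `log₂ n` times, as its cluster at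
least halves whenever it pays.
-/

section CutWeight

variable {α : Type*} {C : α → α → ℝ}

/-- The total weight of the pairs in `A × B`; for disjoint `A` and `B` and symmetric `C`, the weight
of the edges between them. -/
noncomputable def cutWeight (C : α → α → ℝ) (A B : Finset α) : ℝ :=
  ∑ i ∈ A, ∑ j ∈ B, C i j

lemma cutWeight_nonneg (h0 : ∀ i j, 0 ≤ C i j) (A B : Finset α) : 0 ≤ cutWeight C A B :=
  sum_nonneg fun i _ ↦ sum_nonneg fun j _ ↦ h0 i j

lemma cutWeight_comm (hsymm : ∀ i j, C i j = C j i) (A B : Finset α) :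
    cutWeight C A B = cutWeight C B A := by
  simp only [cutWeight, hsymm, sum_comm (s := A)]

lemma cutWeight_empty_right (C : α → α → ℝ) (A : Finset α) : cutWeight C A ∅ = 0 := by
  simp [cutWeight]

lemma cutWeight_mono (h0 : ∀ i j, 0 ≤ C i j) {A A' B B' : Finset α} (hA : A ⊆ A')
    (hB : B ⊆ B') : cutWeight C A B ≤ cutWeight C A' B' :=
  calc
    cutWeight C A B ≤ cutWeight C A B' :=
      sum_le_sum fun i _ ↦ sum_le_sum_of_subset_of_nonneg hB fun j _ _ ↦ h0 i j
    _ ≤ cutWeight C A' B' :=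
      sum_le_sum_of_subset_of_nonneg hA fun i _ _ ↦ sum_nonneg fun j _ ↦ h0 i j

variable [DecidableEq α]

lemma cutWeight_union_right_le (h0 : ∀ i j, 0 ≤ C i j) (A B B' : Finset α) :
    cutWeight C A (B ∪ B') ≤ cutWeight C A B + cutWeight C A B' := by
  simp only [cutWeight, ← sum_add_distrib]
  refine sum_le_sum fun i _ ↦ ?_
  rw [← sum_union_inter]
  exact le_add_of_nonneg_right (sum_nonneg fun j _ ↦ h0 i j)

lemma cutWeight_union_sdiff_le (h0 : ∀ i j, 0 ≤ C i j) {A S : Finset α} (hS : S ⊆ A)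
    (B : Finset α) :
    cutWeight C S ((A ∪ B) \ S) ≤ cutWeight C S (A \ S) + cutWeight C A B :=
  calc
    cutWeight C S ((A ∪ B) \ S) ≤ cutWeight C S (A \ S ∪ B) := by
      refine cutWeight_mono h0 subset_rfl ?_
      rw [union_sdiff_distrib]
      exact union_subset_union_right sdiff_subset
    _ ≤ cutWeight C S (A \ S) + cutWeight C S B := cutWeight_union_right_le h0 _ _ _
    _ ≤ cutWeight C S (A \ S) + cutWeight C A B := by
      gcongr
      exact cutWeight_mono h0 hS subset_rfl

lemma expansionIn_nonneg (h0 : ∀ i j, 0 ≤ C i j) (W S : Finset α) : 0 ≤ expansionIn C W S :=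
  div_nonneg (cutWeight_nonneg h0 _ _) (by positivity)

lemma expansionIn_union_left (C : α → α → ℝ) {A B : Finset α} (hAB : Disjoint A B) :
    expansionIn C (A ∪ B) A = cutWeight C A B / min (#A : ℝ) #B := by
  rw [expansionIn, union_sdiff_cancel_left hAB, cutWeight]

lemma card_mul_expansionIn_le (h0 : ∀ i j, 0 ≤ C i j) {W S : Finset α} (hSW : S ⊆ W)
    (hW : W.Nonempty) (hlower : (#W : ℝ) / 3 ≤ #S) (hupper : (#S : ℝ) ≤ 2 * #W / 3) :
    #W * expansionIn C W S ≤ 3 * cutWeight C S (W \ S) := by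
  have : (0 : ℝ) < #W := mod_cast hW.card_pos
  have hmin : (#W : ℝ) / 3 ≤ min (#S : ℝ) #(W \ S) := by
    refine le_min hlower ?_
    rw [cast_card_sdiff hSW]
    linarith
  calc
    #W * expansionIn C W S ≤ #W * (cutWeight C S (W \ S) / (#W / 3)) := by
      have := cutWeight_nonneg h0 S (W \ S)
      rw [expansionIn, ← cutWeight]
      gcongr
    _ = 3 * cutWeight C S (W \ S) := by field_simp

end CutWeight

namespace HTree

section Basic

variable {α : Type*} [DecidableEq α] {C : α → α → ℝ}

lemma leaves_nonempty (T : HTree α) : T.leaves.Nonempty := by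
  induction T with
  | leaf a => exact singleton_nonempty a
  | node l r hl _ => exact hl.mono subset_union_left

lemma cost_node (C : α → α → ℝ) (l r : HTree α) :
    cost C (node l r) =
      #(l.leaves ∪ r.leaves) * cutWeight C l.leaves r.leaves + cost C l + cost C r :=
  rfl

lemma cost_nonneg (h0 : ∀ i j, 0 ≤ C i j) (T : HTree α) : 0 ≤ cost C T := by
  induction T with
  | leaf => exact le_rfl
  | node l r hl hr =>
    have := cutWeight_nonneg h0 l.leaves r.leaves
    rw [cost_node]
    positivity

lemma leaves_node_comm (l r : HTree α) : (node l r).leaves = (node r l).leaves :=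
  union_comm _ _

lemma cost_node_comm (hsymm : ∀ i j, C i j = C j i) (l r : HTree α) :
    cost C (node l r) = cost C (node r l) := by
  rw [cost_node, cost_node, union_comm, cutWeight_comm hsymm]
  ring

end Basic

section BalancedCut

variable {α : Type*} [DecidableEq α] {C : α → α → ℝ} {b : ℝ} {W S : Finset α}

/-- `S` is a set of leaves of `T` that contains between `b / 2` and `b` elements of `W` and whose
separation from the other leaves of `T` is paid for by `cost C T` at a rate of `b` per unit of
weight. -/
structure IsBalancedCut (C : α → α → ℝ) (b : ℝ) (W : Finset α) (T : HTree α)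
    (S : Finset α) : Prop where
  subset_leaves : S ⊆ T.leaves
  half_le_card : b / 2 ≤ #(S ∩ W)
  card_le : #(S ∩ W) ≤ b
  mul_cutWeight_le : b * cutWeight C S (T.leaves \ S) ≤ cost C T

lemma IsBalancedCut.node_comm (hsymm : ∀ i j, C i j = C j i) {l r : HTree α}
    (hS : IsBalancedCut C b W (node l r) S) : IsBalancedCut C b W (node r l) S where
  subset_leaves := leaves_node_comm l r ▸ hS.subset_leaves
  half_le_card := hS.half_le_card
  card_le := hS.card_le
  mul_cutWeight_le := by
    rw [leaves_node_comm, cost_node_comm hsymm]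
    exact hS.mul_cutWeight_le

lemma mul_cutWeight_le_cost_node (h0 : ∀ i j, 0 ≤ C i j) {l r : HTree α} (hb : 0 ≤ b)
    (hcard : b ≤ #(node l r).leaves) (hS : S ⊆ l.leaves)
    (hcut : b * cutWeight C S (l.leaves \ S) ≤ cost C l) :
    b * cutWeight C S ((node l r).leaves \ S) ≤ cost C (node l r) :=
  calc
    b * cutWeight C S ((node l r).leaves \ S)
      ≤ b * (cutWeight C S (l.leaves \ S) + cutWeight C l.leaves r.leaves) := by
        gcongr
        exact cutWeight_union_sdiff_le h0 hS _
    _ = b * cutWeight C l.leaves r.leaves + b * cutWeight C S (l.leaves \ S) := by ring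
    _ ≤ #(node l r).leaves * cutWeight C l.leaves r.leaves + cost C l := by
        have := cutWeight_nonneg h0 l.leaves r.leaves
        gcongr
    _ ≤ cost C (node l r) := le_add_of_nonneg_right (cost_nonneg h0 r)

lemma exists_isBalancedCut_node_of_card_le (h0 : ∀ i j, 0 ≤ C i j) {l r : HTree α} (hb : 0 ≤ b)
    (hl : b < #(l.leaves ∩ W) → ∃ S, IsBalancedCut C b W l S)
    (hle : #(r.leaves ∩ W) ≤ #(l.leaves ∩ W)) (hcard : b < #((node l r).leaves ∩ W)) :
    ∃ S, IsBalancedCut C b W (node l r) S := by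
  have hcard_node : b ≤ #(node l r).leaves :=
    hcard.le.trans (mod_cast card_le_card inter_subset_left)
  rcases lt_or_ge b #(l.leaves ∩ W) with hlarge | hsmall
  · obtain ⟨S, hS⟩ := hl hlarge
    exact ⟨S, hS.subset_leaves.trans subset_union_left, hS.half_le_card, hS.card_le,
      mul_cutWeight_le_cost_node h0 hb hcard_node hS.subset_leaves hS.mul_cutWeight_le⟩
  · refine ⟨l.leaves, subset_union_left, ?_, hsmall,
      mul_cutWeight_le_cost_node h0 hb hcard_node subset_rfl ?_⟩
    · have hunion : #((node l r).leaves ∩ W) ≤ #(l.leaves ∩ W) + #(r.leaves ∩ W) := by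
        rw [leaves, union_inter_distrib_right]
        exact card_union_le _ _
      have hdouble : (#((node l r).leaves ∩ W) : ℝ) ≤ 2 * #(l.leaves ∩ W) := by
        norm_cast
        lia
      linarith
    · rw [Finset.sdiff_self, cutWeight_empty_right, mul_zero]
      exact cost_nonneg h0 l

lemma exists_isBalancedCut (hsymm : ∀ i j, C i j = C j i) (h0 : ∀ i j, 0 ≤ C i j) (hb : 1 ≤ b)
    (T : HTree α) (hT : b < #(T.leaves ∩ W)) : ∃ S, IsBalancedCut C b W T S := by
  have hb0 : 0 ≤ b := zero_le_one.trans hb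
  induction T with
  | leaf a =>
    have hone : (#((leaf a).leaves ∩ W) : ℝ) ≤ 1 :=
      mod_cast (card_le_card inter_subset_left).trans (card_singleton a).le
    linarith
  | node l r hl hr =>
    rcases le_total #(r.leaves ∩ W) #(l.leaves ∩ W) with hle | hle
    · exact exists_isBalancedCut_node_of_card_le h0 hb0 hl hle hT
    · rw [leaves_node_comm] at hT
      obtain ⟨S, hS⟩ := exists_isBalancedCut_node_of_card_le h0 hb0 hr hle hT
      exact ⟨S, hS.node_comm hsymm⟩

lemma exists_sq_card_mul_expansionIn_le (hsymm : ∀ i j, C i j = C j i) (h0 : ∀ i j, 0 ≤ C i j)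
    (T : HTree α) (hWT : W ⊆ T.leaves) (hW : 2 ≤ #W) :
    ∃ S ⊆ W, S.Nonempty ∧ S ≠ W ∧ #W ^ 2 * expansionIn C W S ≤ 9 / 2 * cost C T := by
  have hWcard : (2 : ℝ) ≤ #W := mod_cast hW
  obtain ⟨S, hS⟩ := exists_isBalancedCut (b := 2 * #W / 3) (W := W) hsymm h0 (by linarith) T
    (by rw [inter_eq_right.mpr hWT]; linarith)
  have hlower : (#W : ℝ) / 3 ≤ #(S ∩ W) := by linarith [hS.half_le_card]
  have hupper := hS.card_le
  refine ⟨S ∩ W, inter_subset_right, ?_, ?_, ?_⟩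
  · rw [← card_pos, ← Nat.cast_pos (α := ℝ)]
    linarith
  · intro heq
    rw [heq] at hupper
    linarith
  · have hWne : W.Nonempty := card_pos.mp (by lia)
    calc
      #W ^ 2 * expansionIn C W (S ∩ W) = #W * (#W * expansionIn C W (S ∩ W)) := by ring
      _ ≤ #W * (3 * cutWeight C (S ∩ W) (W \ (S ∩ W))) := by
        gcongr #W * ?_
        exact card_mul_expansionIn_le h0 inter_subset_right hWne hlower hupper
      _ ≤ #W * (3 * cutWeight C S (T.leaves \ S)) := by
        gcongr
        refine cutWeight_mono h0 inter_subset_left ?_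
        rw [sdiff_inter_self_right]
        exact sdiff_subset_sdiff hWT subset_rfl
      _ = 9 / 2 * (2 * #W / 3 * cutWeight C S (T.leaves \ S)) := by ring
      _ ≤ 9 / 2 * cost C T := by
        gcongr
        exact hS.mul_cutWeight_le

end BalancedCut

section Splits

variable {α : Type*} [DecidableEq α] {C : α → α → ℝ}

/-- `P A B` holds at every internal node, where `A` and `B` are the leaf sets of its left and right
child. -/
def ForallSplits (P : Finset α → Finset α → Prop) : HTree α → Prop
  | leaf _ => True
  | node l r => P l.leaves r.leaves ∧ ForallSplits P l ∧ ForallSplits P r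

lemma ForallSplits.imp {P Q : Finset α → Finset α → Prop} {T : HTree α} (hP : T.ForallSplits P)
    (hT : T.distinctLeaves)
    (hPQ : ∀ A B, A.Nonempty → B.Nonempty → Disjoint A B → A ∪ B ⊆ T.leaves → P A B → Q A B) :
    T.ForallSplits Q := by
  induction T with
  | leaf => trivial
  | node l r hl hr =>
    obtain ⟨hP, hPl, hPr⟩ := hP
    obtain ⟨hTl, hTr, hdisj⟩ := hT
    refine ⟨hPQ _ _ l.leaves_nonempty r.leaves_nonempty hdisj subset_rfl hP,
      hl hPl hTl ?_, hr hPr hTr ?_⟩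
    · exact fun A B hA hB hAB hsub ↦ hPQ A B hA hB hAB (hsub.trans subset_union_left)
    · exact fun A B hA hB hAB hsub ↦ hPQ A B hA hB hAB (hsub.trans subset_union_right)

end Splits

end HTree

lemma mul_logb_add_mul_logb_add_min_le {a b : ℝ} (ha : 0 < a) (hb : 0 < b) :
    a * Real.logb 2 a + b * Real.logb 2 b + min a b ≤ (a + b) * Real.logb 2 (a + b) := by
  wlog hab : a ≤ b generalizing a b
  · rw [min_comm, add_comm a b, add_comm (a * _)]
    exact this hb ha (le_of_not_ge hab)
  have hloga : Real.logb 2 a + 1 ≤ Real.logb 2 (a + b) :=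
    calc
      Real.logb 2 a + 1 = Real.logb 2 (a * 2) := by
        rw [Real.logb_mul ha.ne' two_ne_zero, Real.logb_self_eq_one one_lt_two]
      _ ≤ Real.logb 2 (a + b) := Real.logb_le_logb_of_le one_lt_two (by positivity) (by linarith)
  have hlogb : Real.logb 2 b ≤ Real.logb 2 (a + b) :=
    Real.logb_le_logb_of_le one_lt_two hb (by linarith)
  calc
    a * Real.logb 2 a + b * Real.logb 2 b + min a b
      = a * (Real.logb 2 a + 1) + b * Real.logb 2 b := by rw [min_eq_left hab]; ring
    _ ≤ a * Real.logb 2 (a + b) + b * Real.logb 2 (a + b) := by gcongr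
    _ = (a + b) * Real.logb 2 (a + b) := by ring

lemma HTree.cost_le_mul_card_mul_logb {α : Type*} [DecidableEq α] {C : α → α → ℝ} {K : ℝ}
    (hK : 0 ≤ K) {T : HTree α} (hT : T.distinctLeaves)
    (hsplits : T.ForallSplits fun A B ↦ #(A ∪ B) * cutWeight C A B ≤ K * min (#A : ℝ) #B) :
    cost C T ≤ K * (#T.leaves * Real.logb 2 #T.leaves) := by
  induction T with
  | leaf => simp [cost, leaves]
  | node l r hl hr =>
    obtain ⟨hroot, hsl, hsr⟩ := hsplits
    obtain ⟨hTl, hTr, hdisj⟩ := hT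
    have ha : (0 : ℝ) < #l.leaves := mod_cast l.leaves_nonempty.card_pos
    have hb : (0 : ℝ) < #r.leaves := mod_cast r.leaves_nonempty.card_pos
    have hcard : (#(node l r).leaves : ℝ) = #l.leaves + #r.leaves :=
      mod_cast card_union_of_disjoint hdisj
    set a := (#l.leaves : ℝ)
    set b := (#r.leaves : ℝ)
    calc
      cost C (node l r)
        ≤ K * min a b + K * (a * Real.logb 2 a) + K * (b * Real.logb 2 b) :=
          add_le_add_three hroot (hl hTl hsl) (hr hTr hsr)
      _ = K * (a * Real.logb 2 a + b * Real.logb 2 b + min a b) := by ring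
      _ ≤ K * ((a + b) * Real.logb 2 (a + b)) := by
        gcongr
        exact mul_logb_add_mul_logb_add_min_le ha hb
      _ = K * (#(node l r).leaves * Real.logb 2 #(node l r).leaves) := by rw [hcard]

section CheegerSplit

variable {α : Type*} [DecidableEq α] {C : α → α → ℝ} {κ ε : ℝ}

/-- The split of `A ∪ B` into `A` and `B` is within a Cheeger-type guarantee of the sparsest one:
`φ(A) ≤ κ·√(min_S φ(S) + ε)`, with expansions taken within `A ∪ B` and the minimum expressed by
quantifying over all nonempty proper subsets `S`. -/
def IsCheegerSplit (C : α → α → ℝ) (κ ε : ℝ) (A B : Finset α) : Prop :=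
  ∀ S ⊆ A ∪ B, S.Nonempty → S ≠ A ∪ B →
    expansionIn C (A ∪ B) A ≤ κ * √(expansionIn C (A ∪ B) S + ε)

lemma ApproxCheegerSplits.forallSplits {Δmin Δmax : ℝ} {T : HTree α}
    (hT : ApproxCheegerSplits C Δmin Δmax ε T) :
    T.ForallSplits (IsCheegerSplit C (Δmax / √Δmin) ε) := by
  induction T with
  | leaf => trivial
  | node l r hl hr =>
    obtain ⟨-, hsplit, hsl, hsr⟩ := hT
    exact ⟨hsplit, hl hsl, hr hsr⟩

lemma IsCheegerSplit.card_mul_cutWeight_le (hsymm : ∀ i j, C i j = C j i)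
    (h0 : ∀ i j, 0 ≤ C i j) (hκ : 0 ≤ κ) (hε : 0 ≤ ε) {A B : Finset α} (hA : A.Nonempty)
    (hB : B.Nonempty) (hAB : Disjoint A B) (hsplit : IsCheegerSplit C κ ε A B) {T : HTree α}
    (hT : A ∪ B ⊆ T.leaves) :
    #(A ∪ B) * cutWeight C A B ≤
      κ * √(9 / 2 * T.cost C + #(A ∪ B) ^ 2 * ε) * min (#A : ℝ) #B := by
  have hApos : (0 : ℝ) < #A := mod_cast hA.card_pos
  have hBpos : (0 : ℝ) < #B := mod_cast hB.card_pos
  have hcard : 2 ≤ #(A ∪ B) := by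
    rw [card_union_of_disjoint hAB]
    exact Nat.add_le_add hA.card_pos hB.card_pos
  obtain ⟨S, hS, hSne, hSproper, hsparse⟩ :=
    HTree.exists_sq_card_mul_expansionIn_le hsymm h0 T hT hcard
  set φ := expansionIn C (A ∪ B) S
  have hcut : cutWeight C A B ≤ κ * √(φ + ε) * min (#A : ℝ) #B := by
    rw [← div_le_iff₀ (lt_min hApos hBpos), ← expansionIn_union_left C hAB]
    exact hsplit S hS hSne hSproper
  have hsqrt : #(A ∪ B) * √(φ + ε) ≤ √(9 / 2 * T.cost C + #(A ∪ B) ^ 2 * ε) := by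
    refine Real.le_sqrt_of_sq_le ?_
    rw [mul_pow, Real.sq_sqrt (add_nonneg (expansionIn_nonneg h0 _ _) hε), mul_add]
    gcongr
  calc
    #(A ∪ B) * cutWeight C A B ≤ #(A ∪ B) * (κ * √(φ + ε) * min (#A : ℝ) #B) := by gcongr
    _ = κ * (#(A ∪ B) * √(φ + ε)) * min (#A : ℝ) #B := by ring
    _ ≤ κ * √(9 / 2 * T.cost C + #(A ∪ B) ^ 2 * ε) * min (#A : ℝ) #B := by gcongr

theorem cost_approx_spectral_split_bound_general (hsymm : ∀ i j, C i j = C j i)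
    (h0 : ∀ i j, 0 ≤ C i j) (hκ : 0 ≤ κ) (hε : 0 ≤ ε) {T T' : HTree α}
    (hT : T.distinctLeaves) (hsplits : T.ForallSplits (IsCheegerSplit C κ ε))
    (hleaves : T.leaves ⊆ T'.leaves) :
    T.cost C ≤ κ * √(9 / 2 * T'.cost C + #T.leaves ^ 2 * ε) *
      (#T.leaves * Real.logb 2 #T.leaves) := by
  refine HTree.cost_le_mul_card_mul_logb (by positivity) hT (hsplits.imp hT ?_)
  intro A B hA hB hAB hsub hsplit
  refine (hsplit.card_mul_cutWeight_le hsymm h0 hκ hε hA hB hAB (hsub.trans hleaves)).trans ?_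
  gcongr

end CheegerSplit

lemma div_sqrt_mul_sqrt_le_mul_sqrt_div_mul_sqrt {Δmin Δmax c e : ℝ} (hΔmax : 0 ≤ Δmax)
    (hc : 0 ≤ c) (he : 0 ≤ e) :
    Δmax / √Δmin * √(9 / 2 * c + e) ≤ Δmax * √(27 / Δmin) * √(c + e) :=
  calc
    Δmax / √Δmin * √(9 / 2 * c + e) ≤ Δmax / √Δmin * √(27 * (c + e)) := by
      gcongr
      linarith
    _ = Δmax * √(27 / Δmin) * √(c + e) := by
      rw [Real.sqrt_mul (by norm_num), Real.sqrt_div (by norm_num)]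
      ring

/-- if `T` is a binary hierarchical clustering tree on `V` (`|V| = n ≥ 2`)
whose every internal node has degrees within `[Δ_min, Δ_max]` and whose every split meets
the approximate (power-iteration) Cheeger sweep-cut quality guarantee with slack `ε ≥ 0`,
then `cost_V(T) ≤ Δ_max·√(27/Δ_min)·n·log₂(n)·√(cost_V(T*) + n²·ε)`
where `T*` minimizes `cost_V`. -/
theorem cost_approx_spectral_split_bound {α : Type*} [Fintype α] [DecidableEq α]
    (n : ℕ) (hn : 2 ≤ n) (hcard : Fintype.card α = n)
    (C : α → α → ℝ)
    (hsymm : ∀ i j, C i j = C j i)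
    (h0 : ∀ i j, 0 ≤ C i j) (h1 : ∀ i j, C i j ≤ 1)
    (hdiag : ∀ i, C i i = 0)
    (Δmin Δmax : ℝ) (hΔmin : 0 < Δmin) (hΔ : Δmin ≤ Δmax)
    (ε : ℝ) (hε : 0 ≤ ε)
    (T : HTree α) (hT : T.IsTreeOn) (hsplits : ApproxCheegerSplits C Δmin Δmax ε T)
    (Tstar : HTree α) (hTstar : Tstar.IsTreeOn)
    (hmin : ∀ T' : HTree α, T'.IsTreeOn → HTree.cost C Tstar ≤ HTree.cost C T') :
    HTree.cost C T
      ≤ Δmax * Real.sqrt (27 / Δmin) * (n : ℝ) * Real.logb 2 (n : ℝ)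
          * Real.sqrt (HTree.cost C Tstar + (n : ℝ)^2 * ε) := by
  have hΔmax : 0 ≤ Δmax := hΔmin.le.trans hΔ
  have hlog : 0 ≤ Real.logb 2 n := Real.logb_nonneg one_lt_two (mod_cast one_le_two.trans hn)
  have hbound := cost_approx_spectral_split_bound_general hsymm h0 (by positivity) hε hT.1
    hsplits.forallSplits (hTstar.2 ▸ subset_univ T.leaves)
  rw [hT.2, card_univ, hcard] at hbound
  calc
    T.cost C ≤ _ := hbound
    _ ≤ Δmax * √(27 / Δmin) * √(Tstar.cost C + n ^ 2 * ε) * (n * Real.logb 2 n) := by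
      gcongr ?_ * _
      exact div_sqrt_mul_sqrt_le_mul_sqrt_div_mul_sqrt hΔmax (Tstar.cost_nonneg h0) (by positivity)
    _ = _ := by ring
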